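/- Let 0<p<1 and let (x_n)_{n∈ℕ} together with (x_n*)_{n∈ℕ} be a quasi-greedy basis of ℓ_p. Then ℓ_p embeds in ℓ_p via the basis and ℓ_p embeds in weak-ℓ_p via the basis; i.e., there is a constant C such that: (a) for every real sequence (a_n) with Σ_n |a_n|^p < ∞, the series Σ_n a_n x_n converges in ℓ_p and ‖Σ_n a_n x_n‖_p ≤ C·(Σ_n |a_n|^p)^{1/p}; and (b) for every f ∈ ℓ_p and every t>0, the number of indices n with |x_n*(f)| ≥ t is at most C^p·‖f‖_p^p / t^p. -/

import Mathlib

open scoped BigOperators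

open scoped BigOperators

/-- For `0 < p < 1`, membership in `ℓ_p`: the sequence `(|f j|^p)_j` is summable. -/
def MemLpSeq (p : ℝ) (f : ℕ → ℝ) : Prop := Summable fun j => |f j| ^ p

/-- The `p`-norm `‖f‖_p = (∑_j |f j|^p)^(1/p)`. -/
noncomputable def pNorm (p : ℝ) (f : ℕ → ℝ) : ℝ := (∑' j, |f j| ^ p) ^ (1 / p)

/-- `A` is a greedy set for the coefficient sequence `coef`. -/
def GreedySet (coef : ℕ → ℝ) (A : Finset ℕ) : Prop :=
  ∀ n ∈ A, ∀ k ∉ A, |coef k| ≤ |coef n|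

/-- `(x_n)` together with bounded linear functionals `(x_n^*)` is a basis of `ℓ_p`. -/
structure IsLpBasis (p : ℝ) (x : ℕ → ℕ → ℝ) (xs : ℕ → (ℕ → ℝ) → ℝ) : Prop where
  mem : ∀ n, MemLpSeq p (x n)
  map_add : ∀ n f g, MemLpSeq p f → MemLpSeq p g → xs n (f + g) = xs n f + xs n g
  map_smul : ∀ n (c : ℝ) (f : ℕ → ℝ), MemLpSeq p f → xs n (fun j => c * f j) = c * xs n f
  bdd : ∃ b : ℝ, ∀ n f, MemLpSeq p f → |xs n f| ≤ b * pNorm p f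
  biorth : ∀ m n, xs m (x n) = if m = n then (1 : ℝ) else 0
  dense : ∀ f, MemLpSeq p f → ∀ ε > 0, ∃ (A : Finset ℕ) (c : ℕ → ℝ),
    pNorm p (fun j => f j - ∑ n ∈ A, c n * x n j) < ε
  norm_lb : ∃ c > 0, ∀ n, c ≤ pNorm p (x n)
  norm_ub : ∃ C : ℝ, ∀ n, pNorm p (x n) ≤ C

/-- The basis is quasi-greedy: greedy projections are uniformly bounded. -/
def QuasiGreedy (p : ℝ) (x : ℕ → ℕ → ℝ) (xs : ℕ → (ℕ → ℝ) → ℝ) : Prop :=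
  ∃ C ≥ (1 : ℝ), ∀ f, MemLpSeq p f → ∀ A : Finset ℕ,
    GreedySet (fun n => xs n f) A →
    pNorm p (fun j => ∑ n ∈ A, xs n f * x n j) ≤ C * pNorm p f

noncomputable def qq (p : ℝ) (f : ℕ → ℝ) : ℝ := ∑' j, |f j| ^ p

def VV (x : ℕ → ℕ → ℝ) (A : Finset ℕ) (c : ℕ → ℝ) : ℕ → ℝ := fun j => ∑ n ∈ A, c n * x n j

lemma abs_add_rpow {p : ℝ} (hp0 : 0 < p) (hp1 : p < 1) (a b : ℝ) :
    |a + b| ^ p ≤ |a| ^ p + |b| ^ p :=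
  (Real.rpow_le_rpow (abs_nonneg _) (abs_add_le a b) hp0.le).trans
    (Real.rpow_add_le_add_rpow (abs_nonneg _) (abs_nonneg _) hp0.le hp1.le)

lemma qq_nonneg (p : ℝ) (f : ℕ → ℝ) : 0 ≤ qq p f :=
  tsum_nonneg fun _ => Real.rpow_nonneg (abs_nonneg _) _

lemma pNorm_eq (p : ℝ) (f : ℕ → ℝ) : pNorm p f = qq p f ^ (1 / p) := rfl

lemma pNorm_nonneg (p : ℝ) (f : ℕ → ℝ) : 0 ≤ pNorm p f := Real.rpow_nonneg (qq_nonneg p f) _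

lemma pNorm_rpow {p : ℝ} (hp0 : 0 < p) (f : ℕ → ℝ) : pNorm p f ^ p = qq p f := by
  rw [pNorm_eq, ← Real.rpow_mul (qq_nonneg p f), one_div_mul_cancel hp0.ne', Real.rpow_one]

lemma mem_add {p : ℝ} (hp0 : 0 < p) (hp1 : p < 1) {f g : ℕ → ℝ} (hf : MemLpSeq p f)
    (hg : MemLpSeq p g) : MemLpSeq p (f + g) :=
  Summable.of_nonneg_of_le (fun _ => Real.rpow_nonneg (abs_nonneg _) _)
    (fun j => abs_add_rpow hp0 hp1 (f j) (g j)) (Summable.add hf hg)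

lemma qq_add {p : ℝ} (hp0 : 0 < p) (hp1 : p < 1) {f g : ℕ → ℝ} (hf : MemLpSeq p f)
    (hg : MemLpSeq p g) : qq p (f + g) ≤ qq p f + qq p g := by
  unfold qq
  rw [← Summable.tsum_add hf hg]
  exact Summable.tsum_le_tsum (fun j => abs_add_rpow hp0 hp1 (f j) (g j))
    (mem_add hp0 hp1 hf hg) (Summable.add hf hg)

lemma mem_smul {p : ℝ} (c : ℝ) {f : ℕ → ℝ} (hf : MemLpSeq p f) :
    MemLpSeq p (fun j => c * f j) := by
  unfold MemLpSeq
  simp_rw [abs_mul, Real.mul_rpow (abs_nonneg _) (abs_nonneg _)]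
  exact Summable.mul_left _ hf

lemma qq_smul {p : ℝ} (c : ℝ) (f : ℕ → ℝ) :
    qq p (fun j => c * f j) = |c| ^ p * qq p f := by
  unfold qq
  simp_rw [abs_mul, Real.mul_rpow (abs_nonneg _) (abs_nonneg _)]
  exact tsum_mul_left

lemma le_qq {p : ℝ} {f : ℕ → ℝ} (hf : MemLpSeq p f) (j : ℕ) : |f j| ^ p ≤ qq p f :=
  Summable.le_tsum hf j (fun _ _ => Real.rpow_nonneg (abs_nonneg _) _)

lemma sum_le_qq {p : ℝ} {f : ℕ → ℝ} (hf : MemLpSeq p f) (s : Finset ℕ) :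
    ∑ j ∈ s, |f j| ^ p ≤ qq p f :=
  Summable.sum_le_tsum s (fun _ _ => Real.rpow_nonneg (abs_nonneg _) _) hf

lemma mem_zero {p : ℝ} (hp0 : 0 < p) : MemLpSeq p (0 : ℕ → ℝ) := by
  unfold MemLpSeq
  simp [Real.zero_rpow hp0.ne']
  try exact summable_zero

lemma qq_zero {p : ℝ} (hp0 : 0 < p) : qq p (0 : ℕ → ℝ) = 0 := by
  unfold qq
  simp [Real.zero_rpow hp0.ne']

lemma VV_empty (x : ℕ → ℕ → ℝ) (c : ℕ → ℝ) : VV x ∅ c = 0 := by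
  ext j; simp [VV]

lemma VV_insert (x : ℕ → ℕ → ℝ) (c : ℕ → ℝ) {A : Finset ℕ} {n : ℕ} (h : n ∉ A) :
    VV x (insert n A) c = (fun j => c n * x n j) + VV x A c := by
  ext j; simp [VV, Finset.sum_insert h]

lemma VV_union (x : ℕ → ℕ → ℝ) (c : ℕ → ℝ) {A B : Finset ℕ} (h : Disjoint A B) :
    VV x (A ∪ B) c = VV x A c + VV x B c := by
  ext j; simp [VV, Finset.sum_union h]

lemma VV_congr (x : ℕ → ℕ → ℝ) {c d : ℕ → ℝ} {A : Finset ℕ} (h : ∀ n ∈ A, c n = d n) :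
    VV x A c = VV x A d := by
  ext j; exact Finset.sum_congr rfl fun n hn => by rw [h n hn]

lemma VV_smul (x : ℕ → ℕ → ℝ) (r : ℝ) (c : ℕ → ℝ) (A : Finset ℕ) :
    VV x A (fun n => r * c n) = fun j => r * VV x A c j := by
  ext j; simp [VV, Finset.mul_sum, mul_assoc]

lemma VV_add (x : ℕ → ℕ → ℝ) (c d : ℕ → ℝ) (A : Finset ℕ) :
    VV x A (fun n => c n + d n) = VV x A c + VV x A d := by
  ext j; simp [VV, add_mul, Finset.sum_add_distrib]

lemma mem_VV {p : ℝ} (hp0 : 0 < p) (hp1 : p < 1) {x : ℕ → ℕ → ℝ} (hx : ∀ n, MemLpSeq p (x n))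
    (A : Finset ℕ) (c : ℕ → ℝ) : MemLpSeq p (VV x A c) := by
  induction A using Finset.induction_on with
  | empty => rw [VV_empty]; exact mem_zero hp0
  | insert n A h ih => rw [VV_insert x c h]; exact mem_add hp0 hp1 (mem_smul _ (hx n)) ih

lemma qq_VV {p : ℝ} (hp0 : 0 < p) (hp1 : p < 1) {x : ℕ → ℕ → ℝ} (hx : ∀ n, MemLpSeq p (x n))
    (A : Finset ℕ) (c : ℕ → ℝ) : qq p (VV x A c) ≤ ∑ n ∈ A, |c n| ^ p * qq p (x n) := by
  induction A using Finset.induction_on with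
  | empty => rw [VV_empty, qq_zero hp0]; simp
  | insert n A h ih =>
    rw [VV_insert x c h, Finset.sum_insert h, ← qq_smul]
    have := qq_add hp0 hp1 (mem_smul (c n) (hx n)) (mem_VV hp0 hp1 hx A c)
    linarith

lemma tsum_rpow {p : ℝ} (hp0 : 0 < p) (hp1 : p < 1) {u : ℕ → ℝ}
    (hu : Summable fun n => |u n| ^ p) :
    Summable u ∧ |∑' n, u n| ^ p ≤ ∑' n, |u n| ^ p := by
  have hs : Summable u := by
    apply Summable.of_norm_bounded_eventually_nat hu
    have h1 : ∀ᶠ n in Filter.atTop, |u n| ^ p < 1 :=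
      hu.tendsto_atTop_zero.eventually (gt_mem_nhds one_pos)
    filter_upwards [h1] with n hn
    rw [Real.norm_eq_abs]
    have h2 : |u n| ≤ 1 := by
      by_contra hc
      push Not at hc
      exact absurd (Real.one_lt_rpow hc hp0) (not_lt.2 hn.le)
    rcases (abs_nonneg (u n)).eq_or_lt with h0 | h0
    · rw [← h0]; exact Real.rpow_nonneg le_rfl _
    · calc |u n| = |u n| ^ (1:ℝ) := (Real.rpow_one _).symm
        _ ≤ _ := Real.rpow_le_rpow_of_exponent_ge h0 h2 hp1.le
  refine ⟨hs, ?_⟩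
  have ht : Filter.Tendsto (fun N => |∑ n ∈ Finset.range N, u n| ^ p) Filter.atTop
      (nhds (|∑' n, u n| ^ p)) :=
    (hs.hasSum.tendsto_sum_nat.abs).rpow_const (Or.inr hp0.le)
  refine le_of_tendsto ht (Filter.Eventually.of_forall fun N => ?_)
  refine le_trans ?_ (Summable.sum_le_tsum (Finset.range N)
    (fun _ _ => Real.rpow_nonneg (abs_nonneg _) _) hu)
  induction N with
  | zero => simp [Real.zero_rpow hp0.ne']
  | succ N ih =>
    rw [Finset.sum_range_succ, Finset.sum_range_succ]
    have := abs_add_rpow hp0 hp1 (∑ n ∈ Finset.range N, u n) (u N)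
    linarith

lemma part_a {p : ℝ} (hp0 : 0 < p) (hp1 : p < 1) {x : ℕ → ℕ → ℝ} (hx : ∀ n, MemLpSeq p (x n))
    {D : ℝ} (hD : ∀ n, qq p (x n) ≤ D) {a : ℕ → ℝ} (ha : Summable fun n => |a n| ^ p) :
    (∀ j, Summable fun n => a n * x n j) ∧ MemLpSeq p (fun j => ∑' n, a n * x n j) ∧
      qq p (fun j => ∑' n, a n * x n j) ≤ D * ∑' n, |a n| ^ p := by
  have hq : ∀ n, ∑' j, |a n * x n j| ^ p = |a n| ^ p * qq p (x n) := fun n => qq_smul (a n) (x n)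
  have hle : ∀ n, |a n| ^ p * qq p (x n) ≤ |a n| ^ p * D := fun n =>
    mul_le_mul_of_nonneg_left (hD n) (Real.rpow_nonneg (abs_nonneg _) _)
  have hs1 : Summable fun n => |a n| ^ p * qq p (x n) :=
    Summable.of_nonneg_of_le
      (fun n => mul_nonneg (Real.rpow_nonneg (abs_nonneg _) _) (qq_nonneg _ _)) hle (ha.mul_right D)
  have hs : Summable fun z : ℕ × ℕ => |a z.1 * x z.1 z.2| ^ p := by
    rw [summable_prod_of_nonneg (fun z => Real.rpow_nonneg (abs_nonneg _) _)]
    refine ⟨fun n => mem_smul (a n) (hx n), ?_⟩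
    simp only [hq]
    exact hs1
  have hs' : Summable fun z : ℕ × ℕ => |a z.2 * x z.2 z.1| ^ p := hs.prod_symm
  have hj : ∀ j, Summable fun n => |a n * x n j| ^ p := fun j => hs'.prod_factor j
  have hm : Summable fun j => ∑' n, |a n * x n j| ^ p := hs'.prod
  have hmem : MemLpSeq p (fun j => ∑' n, a n * x n j) :=
    Summable.of_nonneg_of_le (fun _ => Real.rpow_nonneg (abs_nonneg _) _)
      (fun j => (tsum_rpow hp0 hp1 (hj j)).2) hm
  refine ⟨fun j => (tsum_rpow hp0 hp1 (hj j)).1, hmem, ?_⟩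
  calc qq p (fun j => ∑' n, a n * x n j) ≤ ∑' j, ∑' n, |a n * x n j| ^ p :=
        Summable.tsum_le_tsum (fun j => (tsum_rpow hp0 hp1 (hj j)).2) hmem hm
    _ = ∑' n, ∑' j, |a n * x n j| ^ p := (Summable.tsum_comm (f := fun n j => |a n * x n j| ^ p) hs)
    _ = ∑' n, |a n| ^ p * qq p (x n) := by simp only [hq]
    _ ≤ ∑' n, |a n| ^ p * D := Summable.tsum_le_tsum hle hs1 (ha.mul_right D)
    _ = D * ∑' n, |a n| ^ p := by rw [tsum_mul_right, mul_comm]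

lemma part_a_full {p : ℝ} (hp0 : 0 < p) (hp1 : p < 1) {x : ℕ → ℕ → ℝ}
    (hx : ∀ n, MemLpSeq p (x n))
    {D : ℝ} (hD : ∀ n, qq p (x n) ≤ D) {a : ℕ → ℝ} (ha : Summable fun n => |a n| ^ p) :
    ∃ f : ℕ → ℝ, MemLpSeq p f ∧
          Filter.Tendsto
            (fun N => pNorm p (fun j => f j - ∑ n ∈ Finset.range N, a n * x n j))
            Filter.atTop (nhds 0) ∧
          qq p f ≤ D * (∑' n, |a n| ^ p) := by
  obtain ⟨h1, h2, h3⟩ := part_a hp0 hp1 hx hD ha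
  refine ⟨_, h2, ?_, h3⟩
  have htail : Filter.Tendsto (fun N => D * ∑' n, |a (n + N)| ^ p) Filter.atTop (nhds 0) := by
    have := (tendsto_sum_nat_add (fun n => |a n| ^ p)).const_mul D
    simpa using this
  have hq : Filter.Tendsto (fun N => qq p
      (fun j => ∑' n, a n * x n j - ∑ n ∈ Finset.range N, a n * x n j)) Filter.atTop (nhds 0) := by
    refine squeeze_zero (fun N => qq_nonneg _ _) (fun N => ?_) htail
    have := (part_a hp0 hp1 (x := fun n => x (n + N)) (fun n => hx (n + N)) (fun n => hD (n + N))
      (a := fun n => a (n + N)) ((summable_nat_add_iff N).2 ha)).2.2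
    convert this using 3 with j
    rw [← (h1 j).sum_add_tsum_nat_add N]
    ring
  have := hq.rpow_const (p := 1 / p) (Or.inr (by positivity))
  rw [Real.zero_rpow (by positivity)] at this
  exact this

structure Ctx (p : ℝ) (x : ℕ → ℕ → ℝ) (xs : ℕ → (ℕ → ℝ) → ℝ) (K B D : ℝ) : Prop where
  hp0 : 0 < p
  hp1 : p < 1
  hK : 1 ≤ K
  hB : 0 < B
  hD : 0 < D
  mem : ∀ n, MemLpSeq p (x n)
  add : ∀ n f g, MemLpSeq p f → MemLpSeq p g → xs n (f + g) = xs n f + xs n g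
  smul : ∀ n (c : ℝ) (f : ℕ → ℝ), MemLpSeq p f → xs n (fun j => c * f j) = c * xs n f
  bdd : ∀ n f, MemLpSeq p f → |xs n f| ≤ B * pNorm p f
  biorth : ∀ m n, xs m (x n) = if m = n then (1 : ℝ) else 0
  dense : ∀ f, MemLpSeq p f → ∀ ε > 0, ∃ (A : Finset ℕ) (c : ℕ → ℝ),
    pNorm p (fun j => f j - ∑ n ∈ A, c n * x n j) < ε
  ub : ∀ n, qq p (x n) ≤ D
  qg : ∀ f, MemLpSeq p f → ∀ A : Finset ℕ, GreedySet (fun n => xs n f) A →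
    qq p (VV x A (fun n => xs n f)) ≤ K * qq p f

namespace Ctx
variable {p : ℝ} {x : ℕ → ℕ → ℝ} {xs : ℕ → (ℕ → ℝ) → ℝ} {K B D : ℝ}

lemma memV (h : Ctx p x xs K B D) (A : Finset ℕ) (c : ℕ → ℝ) : MemLpSeq p (VV x A c) :=
  mem_VV h.hp0 h.hp1 h.mem A c

lemma xs_zero (h : Ctx p x xs K B D) (n : ℕ) : xs n (0 : ℕ → ℝ) = 0 := by
  have := h.smul n 0 0 (mem_zero h.hp0)
  simp only [zero_mul] at this
  exact this

lemma xs_VV (h : Ctx p x xs K B D) (n : ℕ) (A : Finset ℕ) (c : ℕ → ℝ) :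
    xs n (VV x A c) = if n ∈ A then c n else 0 := by
  induction A using Finset.induction_on with
  | empty => rw [VV_empty]; simpa using h.xs_zero n
  | insert m A hm ih =>
    rw [VV_insert x c hm, h.add n _ _ (mem_smul _ (h.mem m)) (h.memV A c), h.smul n _ _ (h.mem m),
      h.biorth, ih]
    by_cases hn : n = m
    · subst hn; simp [hm]
    · simp [hn]

lemma succ (h : Ctx p x xs K B D) {S A : Finset ℕ} (hS : S ⊆ A) {e : ℕ → ℝ}
    (he : ∀ n, |e n| = 1) : qq p (VV x S e) ≤ K * qq p (VV x A e) := by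
  have := h.qg (VV x A e) (h.memV A e) S (by
    intro n hn k hk
    simp only [h.xs_VV, hS hn, if_true, he]
    split_ifs <;> simp [he])
  rwa [VV_congr x (d := e)] at this
  intro n hn
  simp [h.xs_VV, hS hn]

lemma lpu_aux (h : Ctx p x xs K B D) {A : Finset ℕ} {e : ℕ → ℝ}
    (he : ∀ n, |e n| = 1) (k : ℕ) : ∀ c : ℕ → ℝ, (∀ n ∈ A, 0 ≤ c n ∧ c n ≤ 1) →
    qq p (VV x A (fun n => c n * e n)) ≤ K / (2 ^ p - 1) * qq p (VV x A e)
      + ((2 ^ p : ℝ)⁻¹) ^ k * (A.card * D) := by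
  have h2 : (1 : ℝ) < 2 ^ p := Real.one_lt_rpow (by norm_num) h.hp0
  have hK := h.hK
  have hG := qq_nonneg p (VV x A e)
  have hL : 0 ≤ K / (2 ^ p - 1) := div_nonneg (by linarith) (by linarith)
  induction k with
  | zero =>
    intro c hc
    have h1 := qq_VV h.hp0 h.hp1 h.mem A (fun n => c n * e n)
    have h3 : ∑ n ∈ A, |c n * e n| ^ p * qq p (x n) ≤ ∑ n ∈ A, D := by
      refine Finset.sum_le_sum fun n hn => ?_
      have : |c n * e n| ^ p ≤ 1 := by
        rw [abs_mul, he, mul_one, abs_of_nonneg (hc n hn).1]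
        exact Real.rpow_le_one (hc n hn).1 (hc n hn).2 h.hp0.le
      calc _ ≤ 1 * qq p (x n) := mul_le_mul_of_nonneg_right this (qq_nonneg _ _)
        _ ≤ D := by rw [one_mul]; exact h.ub n
    simp only [Finset.sum_const, nsmul_eq_mul] at h3
    have := mul_nonneg hL hG
    simp only [pow_zero, one_mul]
    linarith
  | succ k ih =>
    intro c hc
    set S := A.filter (fun n => 1 / 2 ≤ c n) with hS
    set c' : ℕ → ℝ := fun n => 2 * c n - if 1 / 2 ≤ c n then 1 else 0 with hc'
    have hb : ∀ n ∈ A, 0 ≤ c' n ∧ c' n ≤ 1 := by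
      intro n hn
      have := hc n hn
      simp only [hc']
      split_ifs with hh
      · constructor <;> linarith
      · push Not at hh
        constructor <;> linarith
    have hdec : VV x A (fun n => c n * e n)
        = fun j => (1 / 2 : ℝ) * (VV x S e + VV x A (fun n => c' n * e n)) j := by
      ext j
      simp only [VV, Pi.add_apply, hS, Finset.sum_filter, ← Finset.sum_add_distrib, Finset.mul_sum]
      refine Finset.sum_congr rfl fun n _ => ?_
      simp only [hc']
      split_ifs <;> ring
    rw [hdec, qq_smul]
    have e1 := qq_add h.hp0 h.hp1 (h.memV S e) (h.memV A (fun n => c' n * e n))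
    have e2 := h.succ (Finset.filter_subset _ A : S ⊆ A) he
    have e3 := ih c' hb
    have hhalf : |(1 / 2 : ℝ)| ^ p = (2 ^ p : ℝ)⁻¹ := by
      rw [abs_of_pos (by norm_num), one_div, Real.inv_rpow (by norm_num)]
    rw [hhalf]
    have hinv : (0 : ℝ) ≤ (2 ^ p)⁻¹ := by positivity
    calc _ ≤ (2 ^ p : ℝ)⁻¹ * (K * qq p (VV x A e) + (K / (2 ^ p - 1) * qq p (VV x A e)
      + ((2 ^ p : ℝ)⁻¹) ^ k * (A.card * D))) := by
          apply mul_le_mul_of_nonneg_left _ hinv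
          linarith
      _ = _ := by
          have : (2 : ℝ) ^ p - 1 ≠ 0 := by linarith
          have : (2 : ℝ) ^ p ≠ 0 := by linarith
          rw [pow_succ]
          field_simp
          ring

lemma lpu (h : Ctx p x xs K B D) {A : Finset ℕ} {e : ℕ → ℝ}
    (he : ∀ n, |e n| = 1) {c : ℕ → ℝ} (hc : ∀ n ∈ A, 0 ≤ c n ∧ c n ≤ 1) :
    qq p (VV x A (fun n => c n * e n)) ≤ K / (2 ^ p - 1) * qq p (VV x A e) := by
  have h2 : (1 : ℝ) < 2 ^ p := Real.one_lt_rpow (by norm_num) h.hp0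
  have ht : Filter.Tendsto (fun k : ℕ => K / (2 ^ p - 1) * qq p (VV x A e)
      + ((2 ^ p : ℝ)⁻¹) ^ k * (A.card * D)) Filter.atTop
      (nhds (K / (2 ^ p - 1) * qq p (VV x A e) + 0 * (A.card * D))) :=
    ((tendsto_pow_atTop_nhds_zero_of_lt_one (by positivity) (inv_lt_one_of_one_lt₀ h2)).mul_const
      _).const_add _
  rw [zero_mul, add_zero] at ht
  exact ge_of_tendsto' ht fun k => h.lpu_aux he k c hc

lemma sign_change (h : Ctx p x xs K B D) {A : Finset ℕ} {e d : ℕ → ℝ}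
    (he : ∀ n, |e n| = 1) (hd : ∀ n, |d n| = 1) :
    qq p (VV x A e) ≤ 2 * K * qq p (VV x A d) := by
  set S := A.filter (fun n => e n = d n) with hS
  set T := A.filter (fun n => ¬ e n = d n) with hT
  have hu : VV x A e = VV x S d + fun j => (-1 : ℝ) * VV x T d j := by
    rw [← VV_smul, ← Finset.filter_union_filter_not_eq (fun n => e n = d n) A,
      VV_union x e (Finset.disjoint_filter_filter_not _ _ _)]
    congr 1
    · exact VV_congr x fun n hn => (Finset.mem_filter.1 hn).2
    · refine VV_congr x fun n hn => ?_
      have h1 := (Finset.mem_filter.1 hn).2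
      rcases abs_eq_abs.1 ((he n).trans (hd n).symm) with h2 | h2
      · exact absurd h2 h1
      · rw [h2]; ring
  rw [hu]
  have h1 := qq_add h.hp0 h.hp1 (h.memV S d) (mem_smul (-1) (h.memV T d))
  rw [qq_smul] at h1
  have h2 := h.succ (Finset.filter_subset _ A : S ⊆ A) hd
  have h3 := h.succ (Finset.filter_subset _ A : T ⊆ A) hd
  simp only [abs_neg, abs_one, Real.one_rpow, one_mul] at h1
  linarith

lemma fin (h : Ctx p x xs K B D) {f : ℕ → ℝ} (hf : MemLpSeq p f) {s : ℝ} (hs : 0 < s) :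
    {n | s ≤ |xs n f|}.Finite := by
  obtain ⟨A, c, hA⟩ := h.dense f hf (s / B) (div_pos hs h.hB)
  refine A.finite_toSet.subset fun n hn => ?_
  by_contra hnA
  simp only [Finset.mem_coe] at hnA
  have hg : MemLpSeq p (f + fun j => (-1 : ℝ) * VV x A c j) :=
    mem_add h.hp0 h.hp1 hf (mem_smul _ (h.memV A c))
  have h1 := h.bdd n _ hg
  rw [h.add n _ _ hf (mem_smul _ (h.memV A c)), h.smul n _ _ (h.memV A c), h.xs_VV] at h1
  simp only [hnA, if_false, mul_zero, add_zero] at h1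
  have h2 : (f + fun j => (-1 : ℝ) * VV x A c j) = fun j => f j - ∑ n ∈ A, c n * x n j := by
    ext j; simp only [Pi.add_apply, VV]; ring
  rw [h2] at h1
  have h3 : B * pNorm p (fun j => f j - ∑ n ∈ A, c n * x n j) < s := by
    rw [lt_div_iff₀ h.hB] at hA; linarith
  exact absurd (lt_of_le_of_lt h1 h3) (not_lt.2 hn)

noncomputable def sg (a : ℝ) : ℝ := if a < 0 then -1 else 1

lemma abs_sg (a : ℝ) : |sg a| = 1 := by unfold sg; split_ifs <;> simp

lemma abs_mul_sg (a : ℝ) : |a| * sg a = a := by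
  unfold sg; split_ifs with hh
  · rw [abs_of_neg hh]; ring
  · rw [abs_of_nonneg (not_lt.1 hh)]; ring

lemma sg_mul (a : ℝ) : sg a * a = |a| := by
  unfold sg; split_ifs with hh
  · rw [abs_of_neg hh]; ring
  · rw [abs_of_nonneg (not_lt.1 hh)]; ring

open Classical in
noncomputable def lev (xs : ℕ → (ℕ → ℝ) → ℝ) (f : ℕ → ℝ) (s : ℝ) : Finset ℕ :=
  if hh : {n | s ≤ |xs n f|}.Finite then hh.toFinset else ∅

lemma mem_lev (h : Ctx p x xs K B D) {f : ℕ → ℝ} (hf : MemLpSeq p f) {s : ℝ} (hs : 0 < s) (n : ℕ) :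
    n ∈ lev xs f s ↔ s ≤ |xs n f| := by
  simp [lev, h.fin hf hs]

lemma greedy_lev (h : Ctx p x xs K B D) {f : ℕ → ℝ} (hf : MemLpSeq p f) {s : ℝ} (hs : 0 < s) :
    GreedySet (fun n => xs n f) (lev xs f s) := by
  intro n hn k hk
  rw [h.mem_lev hf hs] at hn hk
  push Not at hk
  exact hk.le.trans hn

lemma bucket (h : Ctx p x xs K B D) {f : ℕ → ℝ} (hf : MemLpSeq p f) {s l : ℝ} (hs : 0 < s)
    (hl : 1 < l) (hl2 : (l - 1) ^ p * (K / (2 ^ p - 1)) ≤ 1 / 2) :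
    s ^ p * qq p (VV x (lev xs f s \ lev xs f (l * s)) (fun n => sg (xs n f))) ≤ 4 * K * qq p f := by
  have hls : 0 < l * s := by positivity
  set a : ℕ → ℝ := fun n => xs n f with ha
  set A := lev xs f s \ lev xs f (l * s) with hA
  have hsub : lev xs f (l * s) ⊆ lev xs f s := by
    intro n hn
    rw [h.mem_lev hf hls] at hn
    rw [h.mem_lev hf hs]
    nlinarith
  have h1 : VV x A a = VV x (lev xs f s) a + fun j => (-1 : ℝ) * VV x (lev xs f (l * s)) a j := by
    conv_rhs => rw [← Finset.sdiff_union_of_subset hsub]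
    rw [VV_union x a Finset.sdiff_disjoint]
    ext j; simp only [Pi.add_apply]; ring
  have h2 : qq p (VV x A a) ≤ 2 * K * qq p f := by
    rw [h1]
    have e1 := qq_add h.hp0 h.hp1 (h.memV (lev xs f s) a)
      (mem_smul (-1) (h.memV (lev xs f (l * s)) a))
    rw [qq_smul] at e1
    simp only [abs_neg, abs_one, Real.one_rpow, one_mul] at e1
    have e2 := h.qg f hf _ (h.greedy_lev hf hs)
    have e3 := h.qg f hf _ (h.greedy_lev hf hls)
    linarith
  set c : ℕ → ℝ := fun n => (|a n| - s) / ((l - 1) * s) with hc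
  have hpos : 0 < (l - 1) * s := mul_pos (by linarith) hs
  have hc01 : ∀ n ∈ A, 0 ≤ c n ∧ c n ≤ 1 := by
    intro n hn
    rw [hA, Finset.mem_sdiff, h.mem_lev hf hs, h.mem_lev hf hls] at hn
    obtain ⟨u, v⟩ := hn
    push Not at v
    refine ⟨div_nonneg (by simp only [ha]; linarith) hpos.le, ?_⟩
    rw [hc]
    simp only
    rw [div_le_one hpos]
    simp only [ha]; linarith
  have h3 := h.lpu (e := fun n => sg (xs n f)) (fun n => abs_sg _) hc01
  have h4 : (fun j => s * VV x A (fun n => sg (xs n f)) j) = VV x A a +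
      fun j => (-((l - 1) * s)) * VV x A (fun n => c n * sg (xs n f)) j := by
    rw [← VV_smul, ← VV_smul, ← VV_add]
    refine VV_congr x fun n _ => ?_
    have := abs_mul_sg (xs n f)
    simp only [hc]
    have e5 : -((l - 1) * s) * ((|a n| - s) / ((l - 1) * s) * sg (xs n f))
      = - (|a n| * sg (xs n f)) + s * sg (xs n f) := by
      have := hpos.ne'
      generalize (l - 1) * s = w at this
      field_simp
      ring
    rw [e5, ha]
    simp only
    rw [this]; ring
  have h5 := qq_add h.hp0 h.hp1 (h.memV A a)
    (mem_smul (-((l - 1) * s)) (h.memV A (fun n => c n * sg (xs n f))))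
  rw [← h4, qq_smul, qq_smul, abs_neg, abs_of_pos hpos, abs_of_pos hs,
    Real.mul_rpow (by linarith) hs.le] at h5
  have hsp : 0 < s ^ p := Real.rpow_pos_of_pos hs _
  have hG := qq_nonneg p (VV x A (fun n => sg (xs n f)))
  have hlp : 0 ≤ (l - 1) ^ p := Real.rpow_nonneg (by linarith) _
  have h6 : (l - 1) ^ p * s ^ p * qq p (VV x A (fun n => c n * sg (xs n f))) ≤
      1 / 2 * (s ^ p * qq p (VV x A (fun n => sg (xs n f)))) := by
    calc _ ≤ (l - 1) ^ p * s ^ p * (K / (2 ^ p - 1) * qq p (VV x A (fun n => sg (xs n f)))) :=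
          mul_le_mul_of_nonneg_left h3 (by positivity)
      _ = ((l - 1) ^ p * (K / (2 ^ p - 1))) * (s ^ p * qq p (VV x A (fun n => sg (xs n f)))) := by ring
      _ ≤ _ := mul_le_mul_of_nonneg_right hl2 (by positivity)
  linarith

lemma trunc (h : Ctx p x xs K B D) : ∃ T : ℝ, 0 < T ∧ ∀ f, MemLpSeq p f → ∀ s : ℝ, 0 < s →
    s ^ p * qq p (VV x (lev xs f s) (fun n => sg (xs n f))) ≤ T * qq p f := by
  have h2 : (1 : ℝ) < 2 ^ p := Real.one_lt_rpow (by norm_num) h.hp0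
  have hK := h.hK
  have hp0 := h.hp0
  have hL : 0 < K / (2 ^ p - 1) := div_pos (by linarith) (by linarith)
  obtain ⟨l, hl, hl2⟩ : ∃ l : ℝ, 1 < l ∧ (l - 1) ^ p * (K / (2 ^ p - 1)) ≤ 1 / 2 := by
    refine ⟨1 + (1 / (2 * (K / (2 ^ p - 1)))) ^ (1 / p), ?_, ?_⟩
    · have : 0 < (1 / (2 * (K / (2 ^ p - 1)))) ^ (1 / p) := by positivity
      linarith
    · rw [add_sub_cancel_left, ← Real.rpow_mul (by positivity), one_div_mul_cancel hp0.ne',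
        Real.rpow_one]
      generalize K / (2 ^ p - 1) = L at hL
      apply le_of_eq
      field_simp
  have hlp : 1 < l ^ p := Real.one_lt_rpow hl hp0
  have hi : (l ^ p)⁻¹ < 1 := inv_lt_one_of_one_lt₀ hlp
  refine ⟨4 * K / (1 - (l ^ p)⁻¹), div_pos (by linarith) (by linarith), ?_⟩
  intro f hf
  have key : ∀ k : ℕ, ∀ s : ℝ, 0 < s → (∀ n, |xs n f| < l ^ k * s) →
      s ^ p * qq p (VV x (lev xs f s) (fun n => sg (xs n f)))
        ≤ 4 * K / (1 - (l ^ p)⁻¹) * qq p f := by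
    have hT : 0 ≤ 4 * K / (1 - (l ^ p)⁻¹) * qq p f :=
      mul_nonneg (div_nonneg (by linarith) (by linarith)) (qq_nonneg _ _)
    intro k
    induction k with
    | zero =>
      intro s hs hn
      have : lev xs f s = ∅ := by
        ext n
        rw [h.mem_lev hf hs]
        have := hn n
        simp at this
        simpa using this
      rw [this, VV_empty, qq_zero hp0]
      simpa using hT
    | succ k ih =>
      intro s hs hn
      have hls : 0 < l * s := by positivity
      have h1 := ih (l * s) hls (fun n => by have := hn n; rw [pow_succ] at this; linarith)
      have h3 := h.bucket hf hs hl hl2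
      have hsub : lev xs f (l * s) ⊆ lev xs f s := by
        intro n hn
        rw [h.mem_lev hf hls] at hn
        rw [h.mem_lev hf hs]
        nlinarith
      rw [← Finset.sdiff_union_of_subset hsub, VV_union _ _ Finset.sdiff_disjoint]
      have h4 := qq_add hp0 h.hp1 (h.memV (lev xs f s \ lev xs f (l * s)) (fun n => sg (xs n f)))
        (h.memV (lev xs f (l * s)) (fun n => sg (xs n f)))
      have hsp : 0 < s ^ p := Real.rpow_pos_of_pos hs _
      rw [Real.mul_rpow (by linarith) hs.le] at h1
      generalize qq p (VV x (lev xs f (l * s)) (fun n => sg (xs n f))) = u at *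
      generalize l ^ p = m at *
      have h5 : s ^ p * u ≤ m⁻¹ * (4 * K / (1 - m⁻¹) * qq p f) := by
        rw [inv_mul_eq_div, le_div_iff₀ (by linarith)]
        linarith
      calc _ ≤ s ^ p * _ := mul_le_mul_of_nonneg_left h4 hsp.le
        _ ≤ 4 * K * qq p f + m⁻¹ * (4 * K / (1 - m⁻¹) * qq p f) := by rw [mul_add]; linarith
        _ = _ := by
          have : 1 - m⁻¹ ≠ 0 := by linarith
          generalize m⁻¹ = r at *
          field_simp
          ring
  intro s hs
  obtain ⟨k, hk⟩ := pow_unbounded_of_one_lt (B * pNorm p f / s) hl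
  refine key k s hs fun n => (h.bdd n f hf).trans_lt ?_
  rwa [div_lt_iff₀ hs] at hk

lemma trunc' (h : Ctx p x xs K B D) : ∃ T : ℝ, 0 < T ∧ ∀ f, MemLpSeq p f → ∀ t : ℝ, 0 < t →
    ∀ s : Finset ℕ, (∀ n ∈ s, t ≤ |xs n f|) → ∀ e : ℕ → ℝ, (∀ n, |e n| = 1) →
    t ^ p * qq p (VV x s e) ≤ T * qq p f := by
  obtain ⟨T, hT, h1⟩ := h.trunc
  have hK := h.hK
  refine ⟨K * (2 * K) * T, by positivity, fun f hf t ht s hs e he => ?_⟩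
  have h2 := h1 f hf t ht
  have h3 := h.succ (S := s) (A := lev xs f t)
    (fun n hn => (h.mem_lev hf ht n).2 (hs n hn)) he
  have h4 := h.sign_change (A := lev xs f t) he (d := fun n => sg (xs n f)) (fun n => abs_sg _)
  have htp : 0 < t ^ p := Real.rpow_pos_of_pos ht _
  calc _ ≤ t ^ p * (K * (2 * K * qq p (VV x (lev xs f t) (fun n => sg (xs n f))))) := by
        gcongr
        exact h3.trans (by gcongr)
    _ = K * (2 * K) * (t ^ p * qq p (VV x (lev xs f t) (fun n => sg (xs n f)))) := by ring
    _ ≤ K * (2 * K) * (T * qq p f) := by gcongr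
    _ = _ := by ring

def EE (j : ℕ) : ℕ → ℝ := fun i => if i = j then 1 else 0

lemma hasSum_EE (hp0 : 0 < p) (j : ℕ) : HasSum (fun i => |EE j i| ^ p) 1 := by
  have : (fun i => |EE j i| ^ p) = fun i => if i = j then 1 else 0 := by
    ext i
    unfold EE
    split_ifs <;> simp [Real.zero_rpow hp0.ne']
  rw [this]
  exact hasSum_ite_eq j 1

lemma mem_EE (hp0 : 0 < p) (j : ℕ) : MemLpSeq p (EE j) := (hasSum_EE hp0 j).summable

lemma qq_EE (hp0 : 0 < p) (j : ℕ) : qq p (EE j) = 1 := (hasSum_EE hp0 j).tsum_eq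

lemma VV_EE (A : Finset ℕ) (f : ℕ → ℝ) (j : ℕ) : VV EE A f j = if j ∈ A then f j else 0 := by
  simp [VV, EE]

lemma xs_le (h : Ctx p x xs K B D) (n : ℕ) {f : ℕ → ℝ} (hf : MemLpSeq p f) {κ : ℝ} (hκ : 0 ≤ κ)
    (hj : ∀ j, |f j| * |xs n (EE j)| ≤ κ * |f j| ^ p) : |xs n f| ≤ κ * qq p f := by
  have hp0 := h.hp0
  have hmV : ∀ A, MemLpSeq p (VV EE A f) := fun A => mem_VV hp0 h.hp1 (mem_EE hp0) A f
  have hV : ∀ A : Finset ℕ, |xs n (VV EE A f)| ≤ κ * ∑ j ∈ A, |f j| ^ p := by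
    intro A
    induction A using Finset.induction_on with
    | empty => rw [VV_empty, h.xs_zero]; simp
    | insert m A hm ih =>
      rw [VV_insert _ _ hm, h.add n _ _ (mem_smul _ (mem_EE hp0 m)) (hmV A),
        h.smul n _ _ (mem_EE hp0 m), Finset.sum_insert hm, mul_add]
      refine (abs_add_le _ _).trans (add_le_add ?_ ih)
      rw [abs_mul]; exact hj m
  have hb : ∀ N : ℕ, |xs n f| ≤ κ * qq p f + B * (∑' i, |f (i + N)| ^ p) ^ (1 / p) := by
    intro N
    set g : ℕ → ℝ := f + fun j => (-1 : ℝ) * VV EE (Finset.range N) f j with hg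
    have hgm : MemLpSeq p g := mem_add hp0 h.hp1 hf (mem_smul _ (hmV _))
    have hgj : ∀ j, g j = if j < N then 0 else f j := by
      intro j
      simp only [hg, Pi.add_apply, VV_EE, Finset.mem_range]
      split_ifs <;> ring
    have hgq : qq p g = ∑' i, |f (i + N)| ^ p := by
      unfold qq
      rw [← Summable.sum_add_tsum_nat_add N hgm, Finset.sum_eq_zero, zero_add]
      · refine tsum_congr fun i => ?_
        rw [hgj]; simp
      · intro i hi
        rw [hgj, if_pos (Finset.mem_range.1 hi)]
        simp [Real.zero_rpow hp0.ne']
    have hfe : f = g + VV EE (Finset.range N) f := by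
      ext j; simp only [hg, Pi.add_apply]; ring
    have h1 : xs n f = xs n g + xs n (VV EE (Finset.range N) f) := by
      conv_lhs => rw [hfe]
      exact h.add n _ _ hgm (hmV _)
    rw [h1]
    have h2 := h.bdd n g hgm
    rw [pNorm_eq, hgq] at h2
    have h3 := hV (Finset.range N)
    have h4 := mul_le_mul_of_nonneg_left (sum_le_qq hf (Finset.range N)) hκ
    have h5 := abs_add_le (xs n g) (xs n (VV EE (Finset.range N) f))
    linarith
  have ht : Filter.Tendsto (fun N : ℕ => κ * qq p f + B * (∑' i, |f (i + N)| ^ p) ^ (1 / p))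
      Filter.atTop (nhds (κ * qq p f + B * (0:ℝ) ^ (1 / p))) :=
    (((tendsto_sum_nat_add (fun i => |f i| ^ p)).rpow_const
      (Or.inr (by positivity))).const_mul B).const_add _
  rw [Real.zero_rpow (by positivity), mul_zero, add_zero] at ht
  exact ge_of_tendsto' ht hb

lemma rpow_split {a : ℝ} (ha : 0 ≤ a) (hp0 : 0 < p) (hp1 : p < 1) : a = a ^ (1 - p) * a ^ p := by
  rw [← Real.rpow_add_of_nonneg ha (by linarith) hp0.le, sub_add_cancel, Real.rpow_one]

lemma peak (h : Ctx p x xs K B D) : ∃ δ η : ℝ, 0 < δ ∧ 0 < η ∧ ∀ n, ∃ j,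
    δ ≤ |x n j| ∧ η ≤ |xs n (EE j)| := by
  have hp0 := h.hp0
  have hp1 := h.hp1
  have hB := h.hB
  have hD := h.hD
  have h1p : 0 < 1 - p := by linarith
  set M : ℝ := D ^ (1 / p) with hM
  have hMpos : 0 < M := by positivity
  refine ⟨(1 / (2 * D * B)) ^ (1 / (1 - p)), 1 / (2 * D * M ^ (1 - p)), by positivity,
    by positivity, fun n => ?_⟩
  by_contra hcon
  push Not at hcon
  have hxM : ∀ j, |x n j| ≤ M := by
    intro j
    have h1 := (le_qq (h.mem n) j).trans (h.ub n)
    have h2 := Real.rpow_le_rpow (Real.rpow_nonneg (abs_nonneg _) _) h1 (by positivity : 0 ≤ 1 / p)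
    rwa [← Real.rpow_mul (abs_nonneg _), mul_one_div_cancel hp0.ne', Real.rpow_one] at h2
  have hmain := h.xs_le n (h.mem n) (κ := 1 / (2 * D)) (by positivity) (by
    intro j
    have hE : |xs n (EE j)| ≤ B := by
      have := h.bdd n _ (mem_EE hp0 j)
      rwa [pNorm_eq, qq_EE hp0, Real.one_rpow, mul_one] at this
    have hnn := Real.rpow_nonneg (abs_nonneg (x n j)) p
    have hfac : |x n j| ^ (1 - p) * |xs n (EE j)| ≤ 1 / (2 * D) := by
      by_cases hd : (1 / (2 * D * B)) ^ (1 / (1 - p)) ≤ |x n j|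
      · have h2 := hcon j hd
        have h3 := Real.rpow_le_rpow (abs_nonneg _) (hxM j) h1p.le
        calc _ ≤ M ^ (1 - p) * (1 / (2 * D * M ^ (1 - p))) := by gcongr
          _ = _ := by field_simp
      · push Not at hd
        have h3 := Real.rpow_le_rpow (abs_nonneg _) hd.le h1p.le
        rw [← Real.rpow_mul (by positivity), one_div_mul_cancel h1p.ne', Real.rpow_one] at h3
        calc _ ≤ (1 / (2 * D * B)) * B := by gcongr
          _ = _ := by field_simp
    calc |x n j| * |xs n (EE j)| = |x n j| ^ (1 - p) * |x n j| ^ p * |xs n (EE j)| := by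
          rw [← rpow_split (abs_nonneg _) hp0 hp1]
      _ = (|x n j| ^ (1 - p) * |xs n (EE j)|) * |x n j| ^ p := by ring
      _ ≤ _ := mul_le_mul_of_nonneg_right hfac hnn)
  rw [h.biorth] at hmain
  have h4 : 1 / (2 * D) * qq p (x n) ≤ 1 / (2 * D) * D :=
    mul_le_mul_of_nonneg_left (h.ub n) (by positivity)
  have h5 : 1 / (2 * D) * D = 1 / 2 := by field_simp
  simp at hmain
  norm_num at *
  linarith

def sgn (U : Finset ℕ) : ℕ → ℝ := fun n => if n ∈ U then 1 else -1

lemma abs_sgn (U : Finset ℕ) (n : ℕ) : |sgn U n| = 1 := by unfold sgn; split_ifs <;> simp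

lemma avg (hp0 : 0 < p) (hp1 : p < 1) (s : Finset ℕ) (j n : ℕ) (hn : n ∈ s) :
    2 ^ s.card * |x n j| ^ p ≤ 2 * ∑ U ∈ s.powerset, |VV x s (sgn U) j| ^ p := by
  have hflip : ∑ U ∈ s.powerset, |VV x s (sgn U) j| ^ p
      = ∑ U ∈ s.powerset, |VV x s (sgn (symmDiff U {n})) j| ^ p := by
    refine Finset.sum_nbij' (fun U => symmDiff U {n}) (fun U => symmDiff U {n}) ?_ ?_ ?_ ?_ ?_
    · intro U hU
      rw [Finset.mem_powerset] at hU ⊢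
      intro k hk
      simp only [Finset.mem_symmDiff, Finset.mem_singleton] at hk
      rcases hk with hk | hk
      · exact hU hk.1
      · rw [hk.1]; exact hn
    · intro U hU
      rw [Finset.mem_powerset] at hU ⊢
      intro k hk
      simp only [Finset.mem_symmDiff, Finset.mem_singleton] at hk
      rcases hk with hk | hk
      · exact hU hk.1
      · rw [hk.1]; exact hn
    · intro U _; simp
    · intro U _; simp
    · intro U _; simp
  have hpt : ∀ U ∈ s.powerset, |x n j| ^ p ≤
      |VV x s (sgn U) j| ^ p + |VV x s (sgn (symmDiff U {n})) j| ^ p := by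
    intro U _
    have h1 : VV x s (sgn U) j + -VV x s (sgn (symmDiff U {n})) j = 2 * sgn U n * x n j := by
      simp only [VV]
      rw [← sub_eq_add_neg, ← Finset.sum_sub_distrib, Finset.sum_eq_single_of_mem n hn]
      · simp only [sgn, Finset.mem_symmDiff, Finset.mem_singleton]
        by_cases hU : n ∈ U <;> simp [hU] <;> ring
      · intro k _ hk
        simp [sgn, Finset.mem_symmDiff, hk]
    have h2 := abs_add_rpow hp0 hp1 (VV x s (sgn U) j) (-VV x s (sgn (symmDiff U {n})) j)
    rw [h1, abs_neg, abs_mul, abs_mul, abs_sgn] at h2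
    refine le_trans (Real.rpow_le_rpow (abs_nonneg _) ?_ hp0.le) h2
    have := abs_nonneg (x n j)
    norm_num
    linarith
  have := Finset.sum_le_sum hpt
  rw [Finset.sum_const, Finset.card_powerset, Finset.sum_add_distrib, ← hflip, nsmul_eq_mul] at this
  push_cast at this
  linarith

lemma part_b (h : Ctx p x xs K B D) : ∃ R : ℝ, 0 < R ∧ ∀ f, MemLpSeq p f → ∀ t : ℝ, 0 < t →
    ∀ s : Finset ℕ, (∀ n ∈ s, t ≤ |xs n f|) → (s.card : ℝ) ≤ R * qq p f / t ^ p := by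
  have hp0 := h.hp0
  have hp1 := h.hp1
  obtain ⟨T, hT, htr⟩ := h.trunc'
  obtain ⟨δ, η, hδ, hη, hpk⟩ := h.peak
  choose J hJ1 hJ2 using hpk
  have hmul : ∃ M : ℕ, 0 < M ∧ ∀ F : Finset ℕ, ∀ j, (∀ n ∈ F, J n = j) → F.card ≤ M := by
    obtain ⟨M, hM⟩ := exists_nat_ge (T ^ (1 / p) / (η * δ))
    refine ⟨M + 1, by omega, fun F j hF => ?_⟩
    have h1 := htr (EE j) (mem_EE hp0 j) η hη F (fun n hn => by
      have := hJ2 n; rwa [hF n hn] at this) (fun n => sg (x n j)) (fun n => abs_sg _)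
    rw [qq_EE hp0, mul_one] at h1
    have h2 := le_qq (h.memV F (fun n => sg (x n j))) j
    have h3 : (F.card : ℝ) * δ ≤ |VV x F (fun n => sg (x n j)) j| := by
      refine le_trans ?_ (le_abs_self _)
      simp only [VV, sg_mul]
      rw [← nsmul_eq_mul]
      refine Finset.card_nsmul_le_sum F _ _ fun n hn => ?_
      have := hJ1 n; rwa [hF n hn] at this
    have h4 := (Real.rpow_le_rpow (by positivity) h3 hp0.le).trans h2
    have h5 : (η * (F.card * δ)) ^ p ≤ T := by
      rw [Real.mul_rpow hη.le (by positivity)]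
      exact le_trans (mul_le_mul_of_nonneg_left h4 (by positivity)) h1
    have h6 := Real.rpow_le_rpow (by positivity) h5 (by positivity : 0 ≤ 1 / p)
    rw [← Real.rpow_mul (by positivity), mul_one_div_cancel hp0.ne', Real.rpow_one] at h6
    have h7 : (F.card : ℝ) ≤ T ^ (1 / p) / (η * δ) := by
      rw [le_div_iff₀ (by positivity)]
      linarith
    have : (F.card : ℝ) ≤ M := h7.trans hM
    have : F.card ≤ M := by exact_mod_cast this
    omega
  obtain ⟨M, hM, hcard⟩ := hmul
  refine ⟨M * (2 * T / δ ^ p), by positivity, fun f hf t ht s hs => ?_⟩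
  have htp : 0 < t ^ p := by positivity
  have hδp : 0 < δ ^ p := by positivity
  have h1 : s.card ≤ M * (s.image J).card :=
    Finset.card_le_mul_card_image s M (fun j _ => hcard _ j fun n hn => (Finset.mem_filter.1 hn).2)
  have h2 : ∀ U ∈ s.powerset, ∑ j ∈ s.image J, |VV x s (sgn U) j| ^ p ≤ T * qq p f / t ^ p := by
    intro U _
    refine (sum_le_qq (h.memV s (sgn U)) _).trans ?_
    rw [le_div_iff₀ htp]
    have := htr f hf t ht s hs (sgn U) (abs_sgn U)
    linarith
  have h3 := Finset.sum_le_sum h2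
  rw [Finset.sum_const, Finset.card_powerset, nsmul_eq_mul, Finset.sum_comm] at h3
  have h4 : ∀ j ∈ s.image J, 2 ^ s.card * δ ^ p / 2 ≤ ∑ U ∈ s.powerset, |VV x s (sgn U) j| ^ p := by
    intro j hj
    obtain ⟨n, hn, rfl⟩ := Finset.mem_image.1 hj
    have e1 := avg (x := x) hp0 hp1 s (J n) n hn
    have e2 : (2:ℝ) ^ s.card * δ ^ p ≤ 2 ^ s.card * |x n (J n)| ^ p := by
      have := hJ1 n
      gcongr
    linarith
  have h5 := (Finset.card_nsmul_le_sum _ _ _ h4).trans h3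
  rw [nsmul_eq_mul] at h5
  push_cast at h5
  have h6 : ((s.image J).card : ℝ) ≤ (2 * T / δ ^ p) * qq p f / t ^ p := by
    have h2c : (0:ℝ) < 2 ^ s.card := by positivity
    have h7 : ((s.image J).card : ℝ) * (δ ^ p / 2) ≤ T * qq p f / t ^ p := by
      refine le_of_mul_le_mul_left ?_ h2c
      linarith
    rw [← le_div_iff₀ (by positivity)] at h7
    refine h7.trans (le_of_eq ?_)
    field_simp
  have h8 : (s.card : ℝ) ≤ M * (s.image J).card := by exact_mod_cast h1
  calc (s.card : ℝ) ≤ M * (s.image J).card := h8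
    _ ≤ M * ((2 * T / δ ^ p) * qq p f / t ^ p) := by gcongr
    _ = _ := by ring

end Ctx

/-- For a quasi-greedy basis of `ℓ_p`, `0<p<1`: (a) `ℓ_p` embeds in `ℓ_p` via
the basis, and (b) `ℓ_p` embeds in weak-`ℓ_p` via the basis. -/
theorem stmt6 (p : ℝ) (hp0 : 0 < p) (hp1 : p < 1)
    (x : ℕ → ℕ → ℝ) (xs : ℕ → (ℕ → ℝ) → ℝ)
    (hbasis : IsLpBasis p x xs) (hqg : QuasiGreedy p x xs) :
    ∃ C : ℝ, 0 < C ∧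
      (∀ a : ℕ → ℝ, Summable (fun n => |a n| ^ p) →
        ∃ f : ℕ → ℝ, MemLpSeq p f ∧
          Filter.Tendsto
            (fun N => pNorm p (fun j => f j - ∑ n ∈ Finset.range N, a n * x n j))
            Filter.atTop (nhds 0) ∧
          pNorm p f ≤ C * (∑' n, |a n| ^ p) ^ (1 / p)) ∧
      (∀ f, MemLpSeq p f → ∀ t : ℝ, 0 < t → ∀ s : Finset ℕ,
        (∀ n ∈ s, t ≤ |xs n f|) →
        (s.card : ℝ) ≤ C ^ p * pNorm p f ^ p / t ^ p) := by
  obtain ⟨b, hb⟩ := hbasis.bdd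
  obtain ⟨C0, hC0⟩ := hbasis.norm_ub
  obtain ⟨C1, hC1, hq⟩ := hqg
  have hDub : ∀ n, qq p (x n) ≤ (|C0| + 1) ^ p := by
    intro n
    rw [← pNorm_rpow hp0]
    exact Real.rpow_le_rpow (pNorm_nonneg _ _)
      ((hC0 n).trans ((le_abs_self _).trans (by linarith))) hp0.le
  have h : Ctx p x xs (C1 ^ p) (|b| + 1) ((|C0| + 1) ^ p) :=
    { hp0 := hp0
      hp1 := hp1
      hK := Real.one_le_rpow hC1 hp0.le
      hB := by positivity
      hD := by positivity
      mem := hbasis.mem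
      add := hbasis.map_add
      smul := hbasis.map_smul
      bdd := fun n f hf => (hb n f hf).trans
        (mul_le_mul_of_nonneg_right ((le_abs_self b).trans (by linarith)) (pNorm_nonneg _ _))
      biorth := hbasis.biorth
      dense := hbasis.dense
      ub := hDub
      qg := by
        intro f hf A hA
        have h1 := Real.rpow_le_rpow (pNorm_nonneg _ _) (hq f hf A hA) hp0.le
        rwa [Real.mul_rpow (by linarith) (pNorm_nonneg _ _), pNorm_rpow hp0, pNorm_rpow hp0] at h1 }
  obtain ⟨R, hR, hRb⟩ := h.part_b
  set Z : ℝ := max R ((|C0| + 1) ^ p) with hZ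
  have hZ0 : 0 < Z := lt_max_of_lt_left hR
  have hZp : (Z ^ (1 / p)) ^ p = Z := by
    rw [← Real.rpow_mul hZ0.le, one_div_mul_cancel hp0.ne', Real.rpow_one]
  refine ⟨Z ^ (1 / p), by positivity, ?_, ?_⟩
  · intro a ha
    obtain ⟨f, h1, h2, h3⟩ := part_a_full hp0 hp1 hbasis.mem
      (fun n => (hDub n).trans (le_max_right R _)) ha
    refine ⟨f, h1, h2, ?_⟩
    rw [← Real.mul_rpow hZ0.le (tsum_nonneg fun _ => Real.rpow_nonneg (abs_nonneg _) _)]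
    exact Real.rpow_le_rpow (qq_nonneg _ _) h3 (by positivity)
  · intro f hf t ht s hs
    rw [hZp, pNorm_rpow hp0]
    refine (hRb f hf t ht s hs).trans ?_
    have := qq_nonneg p f
    gcongr
    exact le_max_left _ _
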